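/- Let p and q be two distinct prime numbers, let G be a cyclic group of order p, and let A be a G-lattice. Then card H^1(G, A) = p^(d_p − d_q), where d_p is the dimension of the 𝔽_p-vector space (A ⊗ ℤ/pℤ)^G and d_q is the dimension of the 𝔽_q-vector space (A ⊗ ℤ/qℤ)^G. In particular d_q ≤ d_p. -/

import Mathlib

open scoped TensorProduct

/-- The submodule of `G`-fixed points of `ZMod k ⊗[ℤ] A`, where `ZMod k ⊗[ℤ] A` carries the
`G`-action induced (by base change) from the `G`-action `ρ` on `A`. -/
def fixedTensorSub (G : Type) [Group G] (A : Type) [AddCommGroup A] [Module ℤ A]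
    (ρ : Representation ℤ G A) (k : ℕ) : Submodule (ZMod k) (ZMod k ⊗[ℤ] A) where
  carrier := {x | ∀ g : G, LinearMap.baseChange (ZMod k) (ρ g) x = x}
  add_mem' hx hy := fun g => by rw [map_add, hx g, hy g]
  zero_mem' := fun g => by rw [map_zero]
  smul_mem' c x hx := fun g => by rw [map_smul, hx g]

open groupCohomology

section Tensor

variable (k : ℕ) (M : Type) [AddCommGroup M]

theorem tensorMk_one_surjective :
    Function.Surjective (TensorProduct.mk ℤ (ZMod k) M 1) := by
  intro x
  induction x with
  | zero => exact ⟨0, map_zero _⟩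
  | add x y hx hy =>
    obtain ⟨a, rfl⟩ := hx
    obtain ⟨b, rfl⟩ := hy
    exact ⟨a + b, map_add _ _ _⟩
  | tmul c a =>
    obtain ⟨n, rfl⟩ := ZMod.intCast_surjective c
    refine ⟨n • a, ?_⟩
    rw [map_zsmul, TensorProduct.mk_apply, TensorProduct.smul_tmul', zsmul_one]

variable [Module.Free ℤ M] [Module.Finite ℤ M]

theorem tensorMk_one_eq_zero_iff (a : M) :
    TensorProduct.mk ℤ (ZMod k) M 1 a = 0 ↔ a ∈ (nsmulAddMonoidHom (α := M) k).range := by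
  let b := Module.Free.chooseBasis ℤ M
  constructor
  · intro h
    have hdvd : ∀ i, (k : ℤ) ∣ b.repr a i := by
      intro i
      have hi : (b.baseChange (ZMod k)).repr (1 ⊗ₜ[ℤ] a) i = 0 := by
        rw [← TensorProduct.mk_apply, h]
        simp
      rw [Module.Basis.baseChange_repr_tmul] at hi
      rw [← ZMod.intCast_zmod_eq_zero_iff_dvd]
      simpa using hi
    choose c hc using hdvd
    refine ⟨∑ i, c i • b i, ?_⟩
    rw [nsmulAddMonoidHom_apply]
    conv_rhs => rw [← b.sum_repr a]
    rw [Finset.smul_sum]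
    refine Finset.sum_congr rfl fun i _ => ?_
    rw [hc i, mul_smul, natCast_zsmul]
  · rintro ⟨a, rfl⟩
    rw [nsmulAddMonoidHom_apply, map_nsmul, TensorProduct.mk_apply, TensorProduct.smul_tmul']
    simp

theorem ker_tensorMk_one :
    (TensorProduct.mk ℤ (ZMod k) M 1).toAddMonoidHom.ker =
      (nsmulAddMonoidHom (α := M) k).range :=
  AddSubgroup.ext fun a => tensorMk_one_eq_zero_iff k M a

/-- The index of `kM` in the preimage of a subgroup of `ZMod k ⊗ M` is the order of that
subgroup. -/
theorem relIndex_range_nsmul_comap (W : AddSubgroup (ZMod k ⊗[ℤ] M)) :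
    (nsmulAddMonoidHom (α := M) k).range.relIndex
      (W.comap (TensorProduct.mk ℤ (ZMod k) M 1).toAddMonoidHom) = Nat.card W := by
  rw [← ker_tensorMk_one, AddSubgroup.relIndex_ker,
    AddSubgroup.map_comap_eq_self_of_surjective (tensorMk_one_surjective k M)]

theorem index_range_nsmul [Fact k.Prime] :
    (nsmulAddMonoidHom (α := M) k).range.index = k ^ Module.finrank ℤ M := by
  have h := relIndex_range_nsmul_comap k M ⊤
  rw [AddSubgroup.comap_top, AddSubgroup.relIndex_top_right] at h
  rw [h, Nat.card_congr AddSubgroup.topEquiv.toEquiv, Module.natCard_eq_pow_finrank (K := ZMod k),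
    Nat.card_zmod, Module.finrank_baseChange]

end Tensor

/-- For a homomorphism `d : M → C` into a group without `k`-torsion, the index of `kM` in
`d⁻¹(kC)` splits as a contribution of the kernel and a contribution of the `k`-torsion of the
cokernel. -/
theorem relIndex_range_nsmul_comap_range {M C : Type} [AddCommGroup M] [AddCommGroup C]
    (k : ℕ) (hC : Function.Injective (nsmulAddMonoidHom (α := C) k)) (d : M →+ C) :
    (nsmulAddMonoidHom (α := M) k).range.relIndex ((nsmulAddMonoidHom (α := C) k).range.comap d) =
      (nsmulAddMonoidHom (α := M) k).range.relIndex d.ker *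
        d.range.relIndex (d.range.comap (nsmulAddMonoidHom k)) := by
  set S := (nsmulAddMonoidHom (α := C) k).range.comap d
  set K := (nsmulAddMonoidHom (α := M) k).range
  have hker : d.ker ≤ S := fun x hx => by
    rw [AddSubgroup.mem_comap, (AddMonoidHom.mem_ker).1 hx]
    exact zero_mem _
  have hK : K ≤ S := by
    rintro _ ⟨x, rfl⟩
    exact ⟨d x, by simp⟩
  have hmapK : K.map d = d.range.map (nsmulAddMonoidHom k) := by
    rw [AddMonoidHom.map_range, AddMonoidHom.map_range]
    congr 1
    ext x
    simp
  have hmapS : S.map d = (d.range.comap (nsmulAddMonoidHom k)).map (nsmulAddMonoidHom k) := by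
    rw [AddSubgroup.map_comap_eq, AddSubgroup.map_comap_eq, inf_comm]
  rw [← AddSubgroup.relIndex_map_map_of_injective _ _ hC, ← hmapK, ← hmapS,
    AddSubgroup.relIndex_map_map, sup_eq_left.2 hker, ← AddSubgroup.relIndex_sup_right d.ker K,
    sup_comm d.ker K]
  exact (AddSubgroup.relIndex_mul_relIndex _ _ _ le_sup_left (sup_le hK hker)).symm

theorem card_H1_eq_relIndex {R G : Type} [CommRing R] [Group G] (A : Rep.{0} R G) :
    Nat.card (H1 A) = (coboundaries₁ A).toAddSubgroup.relIndex (cocycles₁ A).toAddSubgroup := by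
  let π : cocycles₁ A →+ H1 A := (H1π A).hom.toAddMonoidHom
  have hπ : Function.Surjective π := (ModuleCat.epi_iff_surjective (H1π A)).1 inferInstance
  have hker : π.ker = (coboundaries₁ A).toAddSubgroup.addSubgroupOf (cocycles₁ A).toAddSubgroup :=
    AddSubgroup.ext fun x => H1π_eq_zero_iff x
  have h := AddSubgroup.index_ker π
  rw [AddMonoidHom.range_eq_top.2 hπ, Nat.card_congr AddSubgroup.topEquiv.toEquiv, hker] at h
  exact h.symm

/-- A finite group's order annihilates its first cohomology. -/
theorem card_nsmul_mem_coboundaries₁ {R G : Type} [CommRing R] [Group G] [Finite G]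
    (A : Rep.{0} R G) {f : G → A} (hf : f ∈ cocycles₁ A) :
    Nat.card G • f ∈ coboundaries₁ A := by
  have := Fintype.ofFinite G
  refine ⟨-∑ h, f h, funext fun g => ?_⟩
  have key : ∑ h, f h = A.ρ g (∑ h, f h) + Nat.card G • f g := by
    rw [map_sum, ← Equiv.sum_comp (Equiv.mulLeft g)]
    simp [(mem_cocycles₁_iff f).1 hf, Finset.sum_add_distrib]
  change A.ρ g (-∑ h, f h) - -∑ h, f h = Nat.card G • f g
  rw [map_neg]
  nth_rewrite 2 [key]
  abel

section Lattice

variable {G A : Type} [Group G] [AddCommGroup A] [Module.Free ℤ A]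

theorem nsmulAddMonoidHom_injective_of_free {ι : Type} {k : ℕ} (hk : k ≠ 0) :
    Function.Injective (nsmulAddMonoidHom (α := ι → A) k) := by
  have : IsAddTorsionFree A := .of_isTorsionFree ℤ A
  exact nsmul_right_injective hk

theorem comap_nsmul_coboundaries₁_le (ρ : Representation ℤ G A) {k : ℕ} (hk : k ≠ 0) :
    (coboundaries₁ (Rep.of ρ)).toAddSubgroup.comap (nsmulAddMonoidHom k) ≤
      (cocycles₁ (Rep.of ρ)).toAddSubgroup := by
  have : IsAddTorsionFree A := .of_isTorsionFree ℤ A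
  intro f hf
  have hf' : k • f ∈ cocycles₁ (Rep.of ρ) := coboundaries₁_le_cocycles₁ _ hf
  refine (mem_cocycles₁_iff (A := Rep.of ρ) f).2 fun g h => nsmul_right_injective hk ?_
  have e := (mem_cocycles₁_iff _).1 hf' g h
  simpa only [Pi.smul_apply, map_nsmul, smul_add] using e

theorem comap_mk_fixedTensorSub [Module.Finite ℤ A] (ρ : Representation ℤ G A) (k : ℕ) :
    (fixedTensorSub G A ρ k).toAddSubgroup.comap
        (TensorProduct.mk ℤ (ZMod k) A 1).toAddMonoidHom =
      (nsmulAddMonoidHom (α := G → A) k).range.comap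
        (d₀₁ (Rep.of ρ)).hom.toAddMonoidHom := by
  ext a
  have h : ∀ g, LinearMap.baseChange (ZMod k) (ρ g) (1 ⊗ₜ[ℤ] a) = 1 ⊗ₜ[ℤ] a ↔
      ρ g a - a ∈ (nsmulAddMonoidHom (α := A) k).range := fun g => by
    rw [← tensorMk_one_eq_zero_iff, LinearMap.baseChange_tmul, map_sub, sub_eq_zero]
    rfl
  change (∀ g, LinearMap.baseChange (ZMod k) (ρ g) (1 ⊗ₜ[ℤ] a) = 1 ⊗ₜ[ℤ] a) ↔
    ∃ f : G → A, k • f = fun g => ρ g a - a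
  simp only [h]
  constructor
  · intro H
    choose f hf using H
    exact ⟨f, funext hf⟩
  · rintro ⟨f, hf⟩ g
    exact ⟨f g, congrFun hf g⟩

theorem relIndex_range_nsmul_ker [Module.Finite ℤ A] {C : Type} [AddCommGroup C]
    (k : ℕ) [hk : Fact k.Prime] (hC : Function.Injective (nsmulAddMonoidHom (α := C) k))
    (d : A →+ C) :
    (nsmulAddMonoidHom (α := A) k).range.relIndex d.ker =
      k ^ Module.finrank ℤ (AddMonoidHom.ker d) := by
  have : Module.Free ℤ d.ker := inferInstanceAs (Module.Free ℤ (LinearMap.ker d.toIntLinearMap))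
  have : Module.Finite ℤ d.ker :=
    inferInstanceAs (Module.Finite ℤ (LinearMap.ker d.toIntLinearMap))
  rw [← index_range_nsmul, AddSubgroup.relIndex]
  congr 1
  ext ⟨x, hx⟩
  constructor
  · rintro ⟨y, rfl⟩
    refine ⟨⟨y, hC ?_⟩, rfl⟩
    simpa using (AddMonoidHom.mem_ker).1 hx
  · rintro ⟨y, hy⟩
    exact ⟨y, congrArg Subtype.val hy⟩

/-- The order of `(A ⊗ ℤ/k)^G` is `k ^ rank A^G` times the order of the `k`-torsion of
`H¹(G, A)`. -/
theorem pow_finrank_fixedTensorSub [Module.Finite ℤ A] (ρ : Representation ℤ G A) (k : ℕ)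
    [hk : Fact k.Prime] :
    k ^ Module.finrank (ZMod k) (fixedTensorSub G A ρ k) =
      k ^ Module.finrank ℤ (d₀₁ (Rep.of ρ)).hom.toAddMonoidHom.ker *
        (coboundaries₁ (Rep.of ρ)).toAddSubgroup.relIndex
          ((coboundaries₁ (Rep.of ρ)).toAddSubgroup.comap (nsmulAddMonoidHom k)) := by
  have hC := nsmulAddMonoidHom_injective_of_free (A := A) (ι := G) hk.out.ne_zero
  have h := relIndex_range_nsmul_comap k A (fixedTensorSub G A ρ k).toAddSubgroup
  have h' := Module.natCard_eq_pow_finrank (K := ZMod k) (V := fixedTensorSub G A ρ k)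
  rw [Nat.card_zmod] at h'
  rw [comap_mk_fixedTensorSub, relIndex_range_nsmul_comap_range k hC,
    relIndex_range_nsmul_ker k hC] at h
  exact h'.symm.trans h.symm

end Lattice

/-- Let `p` and `q` be distinct primes, `G` a cyclic group of order `p` and `A` a `G`-lattice.
Then `card H¹(G, A) = p ^ (d_p - d_q)` where `d_p = dim_{𝔽_p} (A ⊗ ℤ/pℤ)^G` and
`d_q = dim_{𝔽_q} (A ⊗ ℤ/qℤ)^G`; in particular `d_q ≤ d_p`. -/
theorem card_H1_cyclic_prime
    (p q : ℕ) (hp : p.Prime) (hq : q.Prime) (hpq : p ≠ q)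
    (G : Type) [Group G] [IsCyclic G] (hG : Nat.card G = p)
    (A : Type) [AddCommGroup A] [Module ℤ A] [Module.Free ℤ A] [Module.Finite ℤ A]
    (ρ : Representation ℤ G A) :
    Module.finrank (ZMod q) (fixedTensorSub G A ρ q) ≤
      Module.finrank (ZMod p) (fixedTensorSub G A ρ p) ∧
    Nat.card (groupCohomology.H1 (Rep.of ρ)) =
      p ^ (Module.finrank (ZMod p) (fixedTensorSub G A ρ p) -
        Module.finrank (ZMod q) (fixedTensorSub G A ρ q)) := by
  obtain rfl : ‹Module ℤ A› = AddCommGroup.toIntModule A := Subsingleton.elim _ _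
  have : Fact p.Prime := ⟨hp⟩
  have : Fact q.Prime := ⟨hq⟩
  have : Finite G := Nat.finite_of_card_ne_zero (hG ▸ hp.ne_zero)
  have hkill : ∀ f ∈ cocycles₁ (Rep.of ρ), p • f ∈ coboundaries₁ (Rep.of ρ) := fun f hf =>
    hG ▸ card_nsmul_mem_coboundaries₁ (Rep.of ρ) hf
  have hP := pow_finrank_fixedTensorSub ρ p
  have hQ := pow_finrank_fixedTensorSub ρ q
  rw [le_antisymm (comap_nsmul_coboundaries₁_le ρ hp.ne_zero) hkill, ← card_H1_eq_relIndex] at hP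
  have hq_le : (coboundaries₁ (Rep.of ρ)).toAddSubgroup.comap (nsmulAddMonoidHom q) ≤
      (coboundaries₁ (Rep.of ρ)).toAddSubgroup := by
    intro f hf
    have hpf := hkill f (comap_nsmul_coboundaries₁_le ρ hq.ne_zero hf)
    have hqf : q • f ∈ coboundaries₁ (Rep.of ρ) := hf
    obtain ⟨u, v, huv⟩ := (Nat.isCoprime_iff_coprime.2 ((Nat.coprime_primes hp hq).2 hpq))
    have e : f = u • p • f + v • q • f := by
      rw [← natCast_zsmul f p, ← natCast_zsmul f q, ← mul_zsmul', ← mul_zsmul', ← add_zsmul,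
        mul_comm _ u, mul_comm _ v, huv, one_zsmul]
    change f ∈ coboundaries₁ (Rep.of ρ)
    rw [e]
    exact add_mem (zsmul_mem hpf u) (zsmul_mem hqf v)
  rw [AddSubgroup.relIndex_eq_one.2 hq_le, mul_one] at hQ
  rw [Nat.pow_right_injective hq.two_le hQ]
  have hle := (Nat.pow_dvd_pow_iff_le_right hp.one_lt).1 (Dvd.intro _ hP.symm)
  refine ⟨hle, Nat.eq_of_mul_eq_mul_left (pow_pos hp.pos _) (hP.symm.trans ?_)⟩
  rw [← pow_add, Nat.add_sub_cancel' hle]
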